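/- arXiv:1105.0405 — 2 statements merged into one kernel-verified Lean document; each statement's English description precedes it below -/
import Mathlib

section
/- Let A be a topological space homeomorphic to S¹ × [0,1] via a homeomorphism h, with boundary circles J₁ = h(S¹ × {0}) and J₂ = h(S¹ × {1}). Let C be a closed subset of A contained in A \ (J₁ ∪ J₂) such that J₁ and J₂ lie in different connected components of A \ C. Then some connected component C' of C has the property that J₁ and J₂ lie in different connected components of A \ C'. -/
open Set Topology

/-- `S` separates `J₁` from `J₂`: no connected component of the complement of `S` that meets
`J₁` also meets `J₂`. -/
def SeparatesSets {X : Type*} [TopologicalSpace X] (S J₁ J₂ : Set X) : Prop :=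
  ∀ a ∈ J₁, ∀ b ∈ J₂, b ∉ connectedComponentIn Sᶜ a

section Separation

variable {X : Type*} [TopologicalSpace X] {J₁ J₂ S T : Set X}

theorem SeparatesSets.mono (h : SeparatesSets S J₁ J₂) (hST : S ⊆ T) : SeparatesSets T J₁ J₂ :=
  fun a ha b hb hab => h a ha b hb (connectedComponentIn_mono a (compl_subset_compl.2 hST) hab)

/-- If maps to the circle that vanish on `J₂` lift to the line, and neither of two disjoint closed
sets separates `J₁` from `J₂`, then their union does not separate them either. -/
theorem not_separatesSets_union [NormalSpace X] [LocallyConnectedSpace X]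
    (hJ₁ : IsPreconnected J₁)
    (hlift : ∀ f : X → AddCircle (1 : ℝ), Continuous f → (∀ x ∈ J₂, f x = 0) →
      ∃ F : X → ℝ, Continuous F ∧ (∀ x, (F x : AddCircle (1 : ℝ)) = f x) ∧ ∀ x ∈ J₂, F x = 0)
    (hS : IsClosed S) (hT : IsClosed T) (hST : Disjoint S T) (hJS : Disjoint (S ∪ T) J₁)
    (hS' : ¬ SeparatesSets S J₁ J₂) (hT' : ¬ SeparatesSets T J₁ J₂) :
    ¬ SeparatesSets (S ∪ T) J₁ J₂ := by
  classical
  intro hsep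
  simp only [SeparatesSets, not_forall, not_not] at hS' hT'
  obtain ⟨a, ha, b, hb, hab⟩ := hS'
  obtain ⟨a', ha', b', hb', hab'⟩ := hT'
  set U := connectedComponentIn (S ∪ T)ᶜ a with hU
  have hopen : IsOpen (S ∪ T)ᶜ := (hS.union hT).isOpen_compl
  have hUo : IsOpen U := hopen.connectedComponentIn
  have hJU : J₁ ⊆ U := hJ₁.subset_connectedComponentIn ha hJS.subset_compl_left
  have hJ₂U : ∀ x ∈ J₂, x ∉ U := fun x hx => hsep a ha x hx
  have hfr : ∀ x ∈ frontier U, x ∈ S ∪ T := by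
    intro x hx
    by_contra hx'
    rw [hUo.frontier_eq] at hx
    obtain ⟨y, hy, hyU⟩ := mem_closure_iff.1 hx.1 (connectedComponentIn (S ∪ T)ᶜ x)
      hopen.connectedComponentIn (mem_connectedComponentIn hx')
    apply hx.2
    rw [hU, connectedComponentIn_eq hyU, ← connectedComponentIn_eq hy]
    exact mem_connectedComponentIn hx'
  obtain ⟨u, hu0, hu1, -⟩ := exists_continuous_zero_one_of_isClosed hT hS hST.symm
  have hcoe : Continuous fun x => (u x : AddCircle (1 : ℝ)) :=
    (AddCircle.continuous_mk' 1).comp u.continuous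
  obtain ⟨F, hF, hFf, hF0⟩ := hlift (U.piecewise (fun x => (u x : AddCircle (1 : ℝ))) 0)
    (continuous_piecewise (by
      intro x hx
      rcases hfr x hx with h | h
      · simp [hu1 h, AddCircle.coe_period]
      · simp [hu0 h]) hcoe.continuousOn continuousOn_const)
    (fun x hx => by simp [hJ₂U x hx])
  have key : ∀ (R : Set X) (r : ℝ), (r : AddCircle (1 : ℝ)) = 0 →
      (∀ x ∈ Rᶜ ∩ frontier U, u x = r) → ∀ p ∈ J₁, ∀ q ∈ J₂, q ∈ connectedComponentIn Rᶜ p →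
      F p = u p - r := by
    intro R r hr hfr' p hp q hq hpq
    have hpR : p ∈ Rᶜ := by
      by_contra h
      simp [connectedComponentIn_eq_empty h] at hpq
    have hg : ContinuousOn (U.piecewise (fun x => u x - r) 0) Rᶜ :=
      ContinuousOn.piecewise (fun x hx => by simp [hfr' x hx])
        (by fun_prop) continuousOn_const
    have := (AddCircle.isCoveringMap_coe (1 : ℝ)).eqOn_of_comp_eqOn
      isPreconnected_connectedComponentIn hF.continuousOn
      (hg.mono (connectedComponentIn_subset _ p))
      (fun x _ => by
        by_cases hx : x ∈ U <;> simp [hFf, hx, hr]) hpq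
      (by simp [hF0 q hq, hJ₂U q hq])
    simpa [hJU hp] using this (mem_connectedComponentIn hpR)
  have h1 : F a = u a - 0 := key S 0 (by simp)
    (fun x hx => hu0 ((hfr x hx.2).resolve_left hx.1)) a ha b hb hab
  have h2 : F a' = u a' - 1 := key T 1 (AddCircle.coe_period 1)
    (fun x hx => hu1 ((hfr x hx.2).resolve_right hx.1)) a' ha' b' hb' hab'
  have h3 := (AddCircle.isCoveringMap_coe (1 : ℝ)).eqOn_of_comp_eqOn hJ₁ hF.continuousOn
    u.continuous.continuousOn (fun x hx => by simp [hFf, hJU hx]) ha (by simpa using h1) ha'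
  linarith

/-- In a compact Hausdorff locally path-connected space, if a component of a closed set `C` does
not separate `J₁` from `J₂`, neither does some relatively clopen subset of `C` containing it. -/
theorem exists_clopen_not_separatesSets [CompactSpace X] [T2Space X] [LocallyPathConnectedSpace X]
    {C : Set X} (hC : IsClosed C) {c : X} (hc : c ∈ C)
    (h : ¬ SeparatesSets (connectedComponentIn C c) J₁ J₂) :
    ∃ K ⊆ C, c ∈ K ∧ IsClosed K ∧ IsClosed (C \ K) ∧ ¬ SeparatesSets K J₁ J₂ := by
  simp only [SeparatesSets, not_forall, not_not] at h
  obtain ⟨a, ha, b, hb, hab⟩ := h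
  have hQ : IsClosed (connectedComponentIn C c) := by
    rw [connectedComponentIn_eq_image hc]
    exact hC.isClosedEmbedding_subtypeVal.isClosedMap _ isClosed_connectedComponent
  have haQ : a ∈ (connectedComponentIn C c)ᶜ := by
    by_contra h
    simp [connectedComponentIn_eq_empty h] at hab
  have hconn : IsConnected (connectedComponentIn (connectedComponentIn C c)ᶜ a) :=
    isConnected_connectedComponentIn_iff.2 haQ
  have hpath := (hQ.isOpen_compl.connectedComponentIn.isConnected_iff_isPathConnected).1 hconn
  obtain ⟨γ, hγ⟩ := hpath.joinedIn a (mem_connectedComponentIn haQ) b hab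
  have hγc : IsClosed (range γ) := (isCompact_range γ.continuous).isClosed
  have : CompactSpace C := isCompact_iff_compactSpace.1 hC.isCompact
  have : Nonempty {s : Set C // IsClopen s ∧ (⟨c, hc⟩ : C) ∈ s} := ⟨⟨univ, isClopen_univ, trivial⟩⟩
  obtain ⟨⟨s, hs, hcs⟩, hsub⟩ := exists_subset_nhds_of_compactSpace
    (V := fun s : {s : Set C // IsClopen s ∧ (⟨c, hc⟩ : C) ∈ s} => s.1)
    (U := ((↑) : C → X) ⁻¹' (range γ)ᶜ)
    (fun s t => ⟨⟨s.1 ∩ t.1, s.2.1.inter t.2.1, s.2.2, t.2.2⟩, inter_subset_left,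
      inter_subset_right⟩)
    (fun s => s.2.1.isClosed) (by
      intro x hx
      rw [← connectedComponent_eq_iInter_isClopen] at hx
      refine (hγc.isOpen_compl.preimage continuous_subtype_val).mem_nhds ?_
      rintro ⟨t, ht⟩
      refine connectedComponentIn_subset _ _ (hγ t) ?_
      rw [ht, connectedComponentIn_eq_image hc]
      exact mem_image_of_mem _ hx)
  refine ⟨(↑) '' s, by simp, ⟨_, hcs, rfl⟩,
    hC.isClosedEmbedding_subtypeVal.isClosedMap _ hs.isClosed, ?_, fun hsep => ?_⟩
  · convert hC.isClosedEmbedding_subtypeVal.isClosedMap _ hs.compl.isClosed using 1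
    rw [image_compl_eq_range_sdiff_image Subtype.val_injective, Subtype.range_coe]
  · refine hsep a ha b hb ?_
    refine (isPreconnected_range γ.continuous).subset_connectedComponentIn ⟨0, γ.source⟩ ?_
      ⟨1, γ.target⟩
    rintro _ ⟨t, rfl⟩ ⟨x, hx, hxt⟩
    exact hsub hx ⟨t, hxt.symm⟩

/-- In a compact Hausdorff, connected, locally path-connected space in which maps to the circle
vanishing on `J₂` lift to the line, a closed set that separates `J₁` from `J₂` has a component
that separates them. -/
theorem exists_component_separatesSets [CompactSpace X] [T2Space X] [LocallyPathConnectedSpace X]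
    [PreconnectedSpace X] (hJ₁ : IsPreconnected J₁) (hJ₁n : J₁.Nonempty) (hJ₂n : J₂.Nonempty)
    (hlift : ∀ f : X → AddCircle (1 : ℝ), Continuous f → (∀ x ∈ J₂, f x = 0) →
      ∃ F : X → ℝ, Continuous F ∧ (∀ x, (F x : AddCircle (1 : ℝ)) = f x) ∧ ∀ x ∈ J₂, F x = 0)
    {C : Set X} (hC : IsClosed C) (hCJ : Disjoint C J₁) (hsep : SeparatesSets C J₁ J₂) :
    ∃ c ∈ C, SeparatesSets (connectedComponentIn C c) J₁ J₂ := by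
  by_contra! hno
  have : ∃ K ⊆ C, C ⊆ K ∧ IsClosed K ∧ IsClosed (C \ K) ∧ ¬ SeparatesSets K J₁ J₂ := by
    refine hC.isCompact.induction_on
      (p := fun s => ∃ K ⊆ C, s ⊆ K ∧ IsClosed K ∧ IsClosed (C \ K) ∧ ¬ SeparatesSets K J₁ J₂)
      ?_ ?_ ?_ ?_
    · obtain ⟨a, ha⟩ := hJ₁n
      obtain ⟨b, hb⟩ := hJ₂n
      refine ⟨∅, empty_subset _, Subset.rfl, isClosed_empty, by simpa using hC, fun h => ?_⟩
      exact h a ha b hb (by simp [connectedComponentIn_univ,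
        PreconnectedSpace.connectedComponent_eq_univ])
    · rintro s t hst ⟨K, hKC, htK, hK⟩
      exact ⟨K, hKC, hst.trans htK, hK⟩
    · rintro s t ⟨K, hKC, hsK, hK, hK', hKs⟩ ⟨L, hLC, htL, hL, hL', hLs⟩
      have hd : IsClosed (L \ K) := by
        convert hL.inter hK' using 1
        grind
      refine ⟨K ∪ L, union_subset hKC hLC, union_subset_union hsK htL, hK.union hL, ?_, ?_⟩
      · rw [← sdiff_inter_sdiff]
        exact hK'.inter hL'
      · rw [← union_sdiff_self]
        exact not_separatesSets_union hJ₁ hlift hK hd disjoint_sdiff_right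
          (hCJ.mono_left (union_subset hKC (sdiff_subset.trans hLC))) hKs
          fun h => hLs (h.mono sdiff_subset)
    · intro c hc
      obtain ⟨K, hKC, hcK, hK, hK', hKs⟩ := exists_clopen_not_separatesSets hC hc (hno c hc)
      refine ⟨K, ?_, K, hKC, Subset.rfl, hK, hK', hKs⟩
      refine mem_nhdsWithin.2 ⟨(C \ K)ᶜ, hK'.isOpen_compl, by simp [hcK], ?_⟩
      rintro x ⟨hx, hxC⟩
      by_contra hxK
      exact hx ⟨hxC, hxK⟩
  obtain ⟨K, -, hCK, -, -, hK⟩ := this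
  exact hK (hsep.mono hCK)

end Separation

/-- A map from a cylinder to the circle that vanishes on the top lifts to the line. -/
theorem exists_lift_addCircle_of_eq_zero_top {Y : Type*} [TopologicalSpace Y]
    {f : Y × unitInterval → AddCircle (1 : ℝ)} (hf : Continuous f) (h : ∀ y, f (y, 1) = 0) :
    ∃ F : Y × unitInterval → ℝ, Continuous F ∧ (∀ x, (F x : AddCircle (1 : ℝ)) = f x) ∧
      ∀ y, F (y, 1) = 0 := by
  let H : C(unitInterval × Y, AddCircle (1 : ℝ)) :=
    ⟨fun q => f (q.2, unitInterval.symm q.1), by fun_prop⟩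
  have H0 : ∀ y, H (0, y) = ((ContinuousMap.const Y (0 : ℝ) y : ℝ) : AddCircle (1 : ℝ)) := by
    simp [H, h]
  have cov := AddCircle.isCoveringMap_coe (1 : ℝ)
  refine ⟨fun x => cov.liftHomotopy H _ H0 (unitInterval.symm x.2, x.1), by fun_prop,
    fun x => ?_, fun y => ?_⟩
  · exact (congrFun (cov.liftHomotopy_lifts H _ H0) (unitInterval.symm x.2, x.1)).trans
      (by simp [H])
  · simpa only [unitInterval.symm_one, ContinuousMap.const_apply] using cov.liftHomotopy_zero H _ H0 y


/-- Lemma `alem1`: if a closed subset `C` of the interior of an annulus `A` separates the two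
boundary circles `J₁` and `J₂`, then some connected component of `C` already separates `J₁`
from `J₂` in `A`. -/
theorem component_separates_annulus
    (A : Type*) [TopologicalSpace A]
    (e : (Metric.sphere (0 : ℂ) 1 × Set.Icc (0 : ℝ) 1) ≃ₜ A)
    (J₁ J₂ C : Set A)
    (hJ₁ : J₁ = Set.range fun z : Metric.sphere (0 : ℂ) 1 =>
      e (z, ⟨0, Set.mem_Icc.mpr (by norm_num)⟩))
    (hJ₂ : J₂ = Set.range fun z : Metric.sphere (0 : ℂ) 1 =>
      e (z, ⟨1, Set.mem_Icc.mpr (by norm_num)⟩))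
    (hC : IsClosed C) (hdisj : C ⊆ (J₁ ∪ J₂)ᶜ)
    (hsep : ∀ a ∈ J₁, ∀ b ∈ J₂, b ∉ connectedComponentIn Cᶜ a) :
    ∃ c ∈ C, ∀ a ∈ J₁, ∀ b ∈ J₂, b ∉ connectedComponentIn (connectedComponentIn C c)ᶜ a := by
  have hsph : IsPathConnected (Metric.sphere (0 : ℂ) 1) :=
    isPathConnected_sphere (by simp [Complex.rank_real_complex]) 0 zero_le_one
  have : PathConnectedSpace (Metric.sphere (0 : ℂ) 1) :=
    isPathConnected_iff_pathConnectedSpace.1 hsph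
  have : LocallyPathConnectedSpace (Metric.sphere (0 : ℂ) 1) := by
    have hq := Circle.isCoveringMap_exp.isQuotientMap Circle.exp_surjective
    exact hq.locallyPathConnectedSpace
  have : LocallyPathConnectedSpace (Set.Icc (0 : ℝ) 1) :=
    (isQuotientMap_projIcc (h := zero_le_one)).locallyPathConnectedSpace
  have : CompactSpace A := e.compactSpace
  have : T2Space A := e.t2Space
  have : PreconnectedSpace A := e.surjective.denseRange.preconnectedSpace e.continuous
  have : LocallyPathConnectedSpace A := e.isQuotientMap.locallyPathConnectedSpace
  refine exists_component_separatesSets (J₁ := J₁) (J₂ := J₂) ?_ ?_ ?_ ?_ hC ?_ hsep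
  · rw [hJ₁]
    exact isPreconnected_range (by fun_prop)
  · rw [hJ₁]
    exact range_nonempty _
  · rw [hJ₂]
    exact range_nonempty _
  · intro f hf h
    obtain ⟨F, hF, hFf, hF1⟩ := exists_lift_addCircle_of_eq_zero_top (hf.comp e.continuous)
      (fun y => h _ (hJ₂ ▸ ⟨y, rfl⟩))
    refine ⟨F ∘ e.symm, hF.comp e.symm.continuous, fun x => by simp [hFf], ?_⟩
    rw [hJ₂]
    rintro _ ⟨y, rfl⟩
    simpa using hF1 y
  · exact (disjoint_compl_left.mono_left hdisj).mono_right subset_union_left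
end

section
/- Let X be a subset of ℝ² and let U be a closed disk (closed metric ball of positive radius) in ℝ² whose boundary circle is not contained in X. If α : S¹ → X is a loop with image contained in X ∩ int(U) that is not null-homotopic in X, then α cannot be freely homotoped in X out of U ∩ X: there is no continuous map F : S¹ × [0,1] → X with F(·, 0) = α and F(S¹ × {1}) ∩ U = ∅. -/
open Set Topology

/-- In a simply connected, locally path-connected normal space (such as the plane), two closed
connected sets that cover the space have a connected intersection. -/
theorem IsPreconnected.inter_of_isClosed_of_union_eq_univ {Z : Type*} [TopologicalSpace Z]
    [SimplyConnectedSpace Z] [LocallyPathConnectedSpace Z] [NormalSpace Z] {P Q : Set Z}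
    (hP : IsPreconnected P) (hQ : IsPreconnected Q) (hPc : IsClosed P) (hQc : IsClosed Q)
    (hPQ : P ∪ Q = univ) : IsPreconnected (P ∩ Q) := by
  classical
  rw [isPreconnected_closed_iff]
  rintro A B hA hB hAB ⟨a, ⟨haP, haQ⟩, haA⟩ ⟨b, ⟨hbP, hbQ⟩, hbB⟩
  by_contra hne
  have hdisj : Disjoint ((P ∩ Q) ∩ A) ((P ∩ Q) ∩ B) := by
    rw [Set.disjoint_left]
    rintro z ⟨hz, hzA⟩ ⟨-, hzB⟩
    exact hne ⟨z, hz, hzA, hzB⟩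
  obtain ⟨u, hu0, hu1, -⟩ := exists_continuous_zero_one_of_isClosed
    ((hPc.inter hQc).inter hA) ((hPc.inter hQc).inter hB) hdisj
  have hcover : ∀ z, z ∉ P → z ∈ Q := fun z hz =>
    (hPQ.symm ▸ mem_univ z : z ∈ P ∪ Q).resolve_left hz
  have hclosure : closure Pᶜ ⊆ Q := hQc.closure_subset_iff.2 hcover
  have hcont : Continuous fun z => if z ∈ P then ((u z / 2 : ℝ) : AddCircle (1 : ℝ))
      else ((-(u z / 2) : ℝ) : AddCircle (1 : ℝ)) := by
    apply Continuous.if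
    · intro z hz
      have hzP : z ∈ P := hPc.frontier_subset hz
      have hzQ : z ∈ Q := hclosure (frontier_subset_closure (frontier_compl P ▸ hz))
      rcases hAB ⟨hzP, hzQ⟩ with h | h
      · simp [hu0 ⟨⟨hzP, hzQ⟩, h⟩]
      · rw [hu1 ⟨⟨hzP, hzQ⟩, h⟩, ← sub_eq_zero, ← AddCircle.coe_sub, AddCircle.coe_eq_zero_iff]
        exact ⟨1, by norm_num⟩
    · exact (AddCircle.continuous_mk' 1).comp (u.continuous.div_const 2)
    · exact (AddCircle.continuous_mk' 1).comp (u.continuous.div_const 2).neg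
  obtain ⟨θ, ⟨-, hθ⟩, -⟩ :=
    (AddCircle.isCoveringMap_coe (1 : ℝ)).existsUnique_continuousMap_lifts ⟨_, hcont⟩ a
      (u a / 2) (by simp [haP])
  have hθP : ∀ z ∈ P, θ z - u z / 2 ∈ range ((↑) : ℤ → ℝ) := by
    intro z hz
    have h := congrFun hθ z
    simp only [Function.comp_apply, ContinuousMap.coe_mk, if_pos hz] at h
    rw [← sub_eq_zero, ← AddCircle.coe_sub, AddCircle.coe_eq_zero_iff] at h
    obtain ⟨n, hn⟩ := h
    exact ⟨n, by simpa using hn⟩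
  have hθQ : ∀ z ∈ Q, θ z + u z / 2 ∈ range ((↑) : ℤ → ℝ) := by
    intro z hz
    by_cases hzP : z ∈ P
    · obtain ⟨n, hn⟩ := hθP z hzP
      rcases hAB ⟨hzP, hz⟩ with h | h
      · have := hu0 ⟨⟨hzP, hz⟩, h⟩
        simp only [Pi.zero_apply] at this
        exact ⟨n, by rw [hn, this]; ring⟩
      · have := hu1 ⟨⟨hzP, hz⟩, h⟩
        simp only [Pi.one_apply] at this
        exact ⟨n + 1, by push_cast; rw [hn, this]; ring⟩
    · have h := congrFun hθ z
      simp only [Function.comp_apply, ContinuousMap.coe_mk, if_neg hzP] at h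
      rw [← sub_eq_zero, ← AddCircle.coe_sub, AddCircle.coe_eq_zero_iff] at h
      obtain ⟨n, hn⟩ := h
      exact ⟨n, by simpa using hn⟩
  have hdisc : IsDiscrete (range ((↑) : ℤ → ℝ)) :=
    ⟨Int.isClosedEmbedding_coe_real.isEmbedding.toHomeomorph.symm.isEmbedding.discreteTopology⟩
  have h₁ := hP.constant_of_mapsTo hdisc
    (f := fun z => θ z - u z / 2) (by fun_prop) hθP haP hbP
  have h₂ := hQ.constant_of_mapsTo hdisc
    (f := fun z => θ z + u z / 2) (by fun_prop) hθQ haQ hbQ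
  have ha : u a = 0 := hu0 ⟨⟨haP, haQ⟩, haA⟩
  have hb : u b = 1 := hu1 ⟨⟨hbP, hbQ⟩, hbB⟩
  simp only [ha, hb] at h₁ h₂
  linarith

theorem closure_connectedComponentIn_inter_subset {Z : Type*} [TopologicalSpace Z] (U : Set Z)
    (x : Z) : closure (connectedComponentIn U x) ∩ U ⊆ connectedComponentIn U x := by
  by_cases hx : x ∈ U
  · refine IsPreconnected.subset_connectedComponentIn
      (isPreconnected_connectedComponentIn.subset_closure (s := connectedComponentIn U x)
        (fun z hz => ⟨subset_closure hz, connectedComponentIn_subset U x hz⟩) inter_subset_left)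
      ⟨subset_closure (mem_connectedComponentIn hx), hx⟩ inter_subset_right
  · simp [connectedComponentIn_eq_empty hx]

/-- The complement of a component of the complement of a connected closed set is connected. -/
theorem isPreconnected_compl_connectedComponentIn_compl {Z : Type*}
    [TopologicalSpace Z] [PreconnectedSpace Z] [LocallyConnectedSpace Z] {B : Set Z}
    (hB : IsPreconnected B) (hBc : IsClosed B) (hne : B.Nonempty) (x : Z) :
    IsPreconnected (connectedComponentIn Bᶜ x)ᶜ := by
  obtain ⟨b, hb⟩ := hne
  have hBsub : B ⊆ (connectedComponentIn Bᶜ x)ᶜ := fun z hz hzC =>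
    connectedComponentIn_subset _ _ hzC hz
  refine isPreconnected_of_forall b fun y hy => ?_
  by_cases hyB : y ∈ B
  · exact ⟨B, hBsub, hb, hyB, hB⟩
  set D := connectedComponentIn Bᶜ y
  have hyD : y ∈ D := mem_connectedComponentIn hyB
  have hDopen : IsOpen D := hBc.isOpen_compl.connectedComponentIn
  have hclosure : closure D ⊆ B ∪ D := fun z hz => by
    by_cases hzB : z ∈ B
    · exact Or.inl hzB
    · exact Or.inr (closure_connectedComponentIn_inter_subset _ _ ⟨hz, hzB⟩)
  have hDne : D ≠ univ := fun h =>
    connectedComponentIn_subset Bᶜ y (h ▸ mem_univ b : b ∈ D) hb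
  obtain ⟨w, hw⟩ := nonempty_frontier_iff.2 ⟨⟨y, hyD⟩, hDne⟩
  have hwD : w ∉ D := fun h => (hDopen.frontier_eq ▸ hw).2 h
  have hwB : w ∈ B := (hclosure (frontier_subset_closure hw)).resolve_right hwD
  refine ⟨B ∪ closure D, union_subset hBsub fun z hz => ?_, Or.inl hb,
    Or.inr (subset_closure hyD), hB.union w hwB (frontier_subset_closure hw)
      isPreconnected_connectedComponentIn.closure⟩
  rcases hclosure hz with h | h
  · exact hBsub h
  · intro hzC
    exact hy (connectedComponentIn_eq hzC ▸ connectedComponentIn_eq h ▸ hyD)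

theorem isPreconnected_frontier_connectedComponentIn_compl {Z : Type*}
    [TopologicalSpace Z] [SimplyConnectedSpace Z] [LocallyPathConnectedSpace Z] [NormalSpace Z]
    {B : Set Z} (hB : IsPreconnected B) (hBc : IsClosed B) (hne : B.Nonempty) (x : Z) :
    IsPreconnected (frontier (connectedComponentIn Bᶜ x)) := by
  have hopen : IsOpen (connectedComponentIn Bᶜ x) := hBc.isOpen_compl.connectedComponentIn
  rw [hopen.frontier_eq, sdiff_eq]
  refine IsPreconnected.inter_of_isClosed_of_union_eq_univ
    isPreconnected_connectedComponentIn.closure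
    (isPreconnected_compl_connectedComponentIn_compl hB hBc hne x) isClosed_closure
    hopen.isClosed_compl ?_
  exact eq_univ_of_subset (union_subset_union_left _ subset_closure) (union_compl_self _)

/-- A free homotopy of loops, spread over the punctured plane in polar coordinates. -/
theorem ContinuousMap.Homotopic.exists_polar {X : Type*} [TopologicalSpace X]
    {f g : C(Metric.sphere (0 : ℂ) 1, X)} (h : f.Homotopic g) :
    ∃ Φ : ℂ → X, ContinuousOn Φ {0}ᶜ ∧ (∀ z : Metric.sphere (0 : ℂ) 1, Φ z = f z) ∧
      ∀ z : ℂ, ‖z‖ ≤ 1 / 2 → Φ z ∈ range g := by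
  classical
  obtain ⟨H⟩ := h
  let u : ℂ → Metric.sphere (0 : ℂ) 1 := fun z =>
    if hz : z = 0 then ⟨1, by simp⟩ else ⟨z / ‖z‖, by simp [hz]⟩
  have hu : ContinuousOn u {0}ᶜ := by
    rw [IsInducing.subtypeVal.continuousOn_iff]
    have hdiv : ContinuousOn (fun z : ℂ => z / (‖z‖ : ℂ)) {0}ᶜ :=
      continuousOn_id.div (by fun_prop) fun z hz => by simpa using hz
    refine hdiv.congr fun z hz => ?_
    have hz0 : z ≠ 0 := hz
    simp [u, hz0]
  refine ⟨fun z => H (projIcc 0 1 zero_le_one (2 * (1 - ‖z‖)), u z), ?_, fun z => ?_,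
    fun z hz => ?_⟩
  · refine H.continuous.comp_continuousOn (ContinuousOn.prodMk ?_ hu)
    exact (continuous_projIcc.comp (by fun_prop)).continuousOn
  · have hz : ‖(z : ℂ)‖ = 1 := by simp
    have hz0 : (z : ℂ) ≠ 0 := fun h => by simp [h] at hz
    have huz : u z = z := by
      apply Subtype.ext
      simp [u, hz0]
    have ht : projIcc (0 : ℝ) 1 zero_le_one (2 * (1 - ‖(z : ℂ)‖)) = 0 :=
      projIcc_of_le_left _ (by rw [hz]; norm_num)
    simp only [ht, huz, H.apply_zero]
  · have ht : projIcc (0 : ℝ) 1 zero_le_one (2 * (1 - ‖z‖)) = 1 :=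
      projIcc_of_right_le _ (by linarith)
    exact ⟨u z, by simp only [ht, H.apply_one]⟩

/-- A circle minus a point is an arc, so a map from a closed connected set into `X` whose values
lie on a circle not contained in `X` extends to the whole space. -/
theorem exists_continuous_extension_of_mem_sphere {Z : Type*} [TopologicalSpace Z] [NormalSpace Z]
    {X : Set ℂ} {c p : ℂ} {r : ℝ} (hr : 0 < r) (hp : p ∈ Metric.sphere c r) (hpX : p ∉ X)
    {K : Set Z} (hK : IsClosed K) (hKpre : IsPreconnected K) (hKne : K.Nonempty) {Φ : Z → X}
    (hΦ : ContinuousOn Φ K) (hmem : ∀ z ∈ K, (Φ z : ℂ) ∈ Metric.sphere c r) :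
    ∃ Ψ : Z → X, Continuous Ψ ∧ EqOn Ψ Φ K := by
  have hpc : ‖p - c‖ = r := by simpa [dist_eq_norm] using hp
  have hpc0 : p - c ≠ 0 := norm_pos_iff.1 (hpc ▸ hr)
  let q : Z → ℂ := fun z => -((Φ z : ℂ) - c) / (p - c)
  have hqnorm : ∀ z ∈ K, ‖q z‖ = 1 := fun z hz => by
    have h : ‖(Φ z : ℂ) - c‖ = r := by simpa [dist_eq_norm] using hmem z hz
    simp only [q, norm_div, norm_neg, h, hpc]
    exact div_self hr.ne'
  have hΦq : ∀ z, c - (p - c) * q z = Φ z := fun z => by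
    simp only [q]
    field_simp
    ring
  have hexp : ∀ z ∈ K, Complex.exp ((q z).arg * Complex.I) = q z := fun z hz => by
    have h := Complex.norm_mul_exp_arg_mul_I (q z)
    rwa [hqnorm z hz, Complex.ofReal_one, one_mul] at h
  have hslit : ∀ z ∈ K, q z ∈ Complex.slitPlane := fun z hz => by
    rw [Complex.mem_slitPlane_iff_arg]
    refine ⟨fun harg => hpX ?_, fun h0 => by simpa [h0] using hqnorm z hz⟩
    have h := hexp z hz
    rw [harg, Complex.exp_pi_mul_I] at h
    have hpΦ := hΦq z
    rw [← h] at hpΦ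
    have : p = Φ z := by rw [← hpΦ]; ring
    exact this ▸ (Φ z).2
  have hq : ContinuousOn q K :=
    ((continuous_subtype_val.comp_continuousOn hΦ).sub continuousOn_const).neg.div_const _
  have harg : ContinuousOn (fun z => (q z).arg) K := fun z hz =>
    (Complex.continuousAt_arg (hslit z hz)).comp_continuousWithinAt (hq z hz)
  have : OrdConnected ((fun z => (q z).arg) '' K) := (hKpre.image _ harg).ordConnected
  obtain ⟨g, hg, hgK⟩ := ContinuousMap.exists_extension_forall_mem_of_isClosedEmbedding
    ⟨_, harg.domRestrict⟩ (t := (fun z => (q z).arg) '' K) (fun z => ⟨z, z.2, rfl⟩)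
    (hKne.image _) hK.isClosedEmbedding_subtypeVal
  have hgX : ∀ z, c - (p - c) * Complex.exp (g z * Complex.I) ∈ X := fun z => by
    obtain ⟨w, hw, hwz⟩ := hg z
    rw [← hwz, hexp w hw, hΦq w]
    exact (Φ w).2
  refine ⟨fun z => ⟨_, hgX z⟩, Continuous.subtype_mk (by fun_prop) _, fun z hz => ?_⟩
  have hgz : g z = (q z).arg := congrFun hgK ⟨z, hz⟩
  apply Subtype.ext
  simp only [hgz, hexp z hz, hΦq]


/-- Lemma `homotoped off`: let `X ⊆ ℝ²` and let `U` be a closed disk whose boundary circle is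
not contained in `X`. An essential loop in `X ∩ int U` cannot be freely homotoped in `X` out
of `U ∩ X`. -/
theorem essential_loop_not_homotoped_off
    (X : Set ℂ) (c : ℂ) (r : ℝ) (hr : 0 < r)
    (hbd : ¬ Metric.sphere c r ⊆ X)
    (α : C(Metric.sphere (0 : ℂ) 1, X))
    (him : ∀ z, (α z : ℂ) ∈ Metric.ball c r)
    (hess : ¬ ∃ β : C(Metric.closedBall (0 : ℂ) 1, X),
      ∀ z : Metric.sphere (0 : ℂ) 1, β ⟨z, Metric.sphere_subset_closedBall z.2⟩ = α z) :
    ¬ ∃ (g : C(Metric.sphere (0 : ℂ) 1, X)) (_ : α.Homotopic g),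
        ∀ z, (g z : ℂ) ∉ Metric.closedBall c r := by
  classical
  rintro ⟨g, hg, hgU⟩
  apply hess
  obtain ⟨p, hp, hpX⟩ := not_subset.1 hbd
  obtain ⟨Φ, hΦ, hΦα, hΦg⟩ := hg.exists_polar
  have hΦout : ∀ z : ℂ, ‖z‖ ≤ 1 / 2 → (Φ z : ℂ) ∉ Metric.closedBall c r := fun z hz => by
    obtain ⟨w, hw⟩ := hΦg z hz
    exact hw ▸ hgU w
  have hΦ' : ContinuousOn (fun z => (Φ z : ℂ)) {0}ᶜ := continuous_subtype_val.comp_continuousOn hΦ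
  have h0 : (Φ 0 : ℂ) ∉ Metric.closedBall c r := hΦout 0 (by simp)
  have hclosed : IsClosed {z | (Φ z : ℂ) ∈ Metric.closedBall c r} := by
    have hnorm : IsClosed {z : ℂ | 1 / 2 ≤ ‖z‖} := isClosed_le continuous_const continuous_norm
    convert! (hΦ'.mono fun z (hz : 1 / 2 ≤ ‖z‖) => ?_).preimage_isClosed_of_isClosed hnorm
      (Metric.isClosed_closedBall (x := c) (ε := r)) using 1
    · ext z
      exact ⟨fun hz => ⟨(lt_of_not_ge fun h => hΦout z h hz).le, hz⟩, fun hz => hz.2⟩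
    · rintro rfl
      norm_num at hz
  have hopen : IsOpen {z | (Φ z : ℂ) ∈ Metric.ball c r} := by
    convert! hΦ'.isOpen_inter_preimage isOpen_compl_singleton
      (Metric.isOpen_ball (x := c) (ε := r)) using 1
    ext z
    refine ⟨fun hz => ⟨?_, hz⟩, fun hz => hz.2⟩
    rintro rfl
    exact h0 (Metric.ball_subset_closedBall hz)
  -- The component of the preimage of the open disk that contains the unit circle.
  set E := connectedComponentIn {z | (Φ z : ℂ) ∈ Metric.ball c r} 1
  have hEopen : IsOpen E := hopen.connectedComponentIn
  have hsphere : Metric.sphere (0 : ℂ) 1 ⊆ E := by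
    refine (isPreconnected_sphere (by simp [Complex.rank_real_complex])
      0 1).subset_connectedComponentIn (by simp) fun z hz => ?_
    have h := hΦα ⟨z, hz⟩
    simp only at h
    simp only [mem_ofPred_eq, h]
    exact him _
  have hEclosure : closure E ⊆ {z | (Φ z : ℂ) ∈ Metric.closedBall c r} :=
    closure_minimal ((connectedComponentIn_subset _ _).trans fun z hz =>
      Metric.ball_subset_closedBall hz) hclosed
  have hEne : E.Nonempty := ⟨1, hsphere (by simp)⟩
  -- The hole of that component around the origin.
  set C := connectedComponentIn (closure E)ᶜ 0
  have hCopen : IsOpen C := isClosed_closure.isOpen_compl.connectedComponentIn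
  have h0C : (0 : ℂ) ∈ C := mem_connectedComponentIn fun h => h0 (hEclosure h)
  have hCE : Disjoint C E := by
    rw [Set.disjoint_left]
    exact fun z hz hzE => connectedComponentIn_subset _ _ hz (subset_closure hzE)
  have hfrontier : ∀ z ∈ frontier C, (Φ z : ℂ) ∈ Metric.sphere c r := fun z hz => by
    rw [hCopen.frontier_eq] at hz
    have hzE : z ∈ closure E := by
      by_contra h
      exact hz.2 (closure_connectedComponentIn_inter_subset _ _ ⟨hz.1, h⟩)
    refine (Metric.mem_closedBall.1 (hEclosure hzE)).eq_of_not_lt fun hlt => ?_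
    have hzE' : z ∈ E := closure_connectedComponentIn_inter_subset _ _ ⟨hzE, hlt⟩
    exact Set.disjoint_left.1 (hCE.closure_left hEopen) hz.1 hzE'
  have hfne : (frontier C).Nonempty := nonempty_frontier_iff.2 ⟨⟨0, h0C⟩, fun h =>
    Set.disjoint_left.1 hCE (h ▸ mem_univ 1) (hsphere (by simp))⟩
  have hne0 : Cᶜ ⊆ {0}ᶜ := compl_subset_compl.2 (singleton_subset_iff.2 h0C)
  obtain ⟨Ψ, hΨ, hΨΦ⟩ := exists_continuous_extension_of_mem_sphere hr hp hpX isClosed_frontier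
    (isPreconnected_frontier_connectedComponentIn_compl
      isPreconnected_connectedComponentIn.closure isClosed_closure hEne.closure 0) hfne
    (hΦ.mono (hCopen.frontier_eq.subset.trans fun _ hz => hne0 hz.2)) hfrontier
  have hβ : Continuous (C.piecewise Ψ Φ) := continuous_piecewise hΨΦ hΨ.continuousOn
    (hΦ.mono (hCopen.isClosed_compl.closure_eq.subset.trans hne0))
  refine ⟨⟨fun z => C.piecewise Ψ Φ z, hβ.comp continuous_subtype_val⟩, fun z => ?_⟩
  have hz : (z : ℂ) ∉ C := fun h => Set.disjoint_left.1 hCE h (hsphere z.2)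
  exact (piecewise_eq_of_notMem _ _ _ hz).trans (hΦα z)
end
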